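/- There exists an absolute constant C > 0 such that for every θ ∈ (0,1) and every positive integer n, ∫_{A} G(s,t,u,v) ds dt du dv ≤ C · n^{2-θ} θ^{-2} (1-θ)^{-2}, and there exists an absolute constant c > 0 such that this integral is ≥ c · n^{2-θ} θ^{-2} (1-θ)^{-2} whenever additionally n^{1-θ} ≥ 8; here A = { (s,t,u,v) ∈ (0,∞)⁴ : 0 < u < 1, n^{-1/2} ≤ v < 1, s ≥ n^{1/4} u^{1/2} v^{1/2}, t ≥ n^{1/4} }. -/

import Mathlib

open MeasureTheory Set Real

/-- The integrand `G(s,t,u,v)` from the paper's computation of the completely 1-summing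
norm of the identity `OH_n → ℓ^n_p`, with `θ = 2/p'`. Here `p = (s, t, u, v)`. -/
noncomputable def G (θ : ℝ) (n : ℕ) (p : ℝ × ℝ × ℝ × ℝ) : ℝ :=
  (n : ℝ) ^ (2 : ℕ) * p.1 ^ (-1 - 2 * θ) * p.2.1 ^ (-1 - 2 * θ) *
    min (min (min ((n : ℝ)⁻¹ * p.1 ^ (4 : ℝ) * p.2.2.1 ^ (-2 : ℝ) * p.2.2.2 ^ (-2 : ℝ))
                  ((n : ℝ)⁻¹ * p.2.1 ^ (4 : ℝ)))
             (min (p.1 ^ (4 : ℝ) * p.2.2.1 ^ (-2 : ℝ)) (p.2.1 ^ (4 : ℝ) * p.2.2.2 ^ (-2 : ℝ))))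
        (min (min (p.2.2.1 ^ (-2 : ℝ) * p.2.2.2 ^ (-2 : ℝ)) (p.2.2.1 ^ (-2 : ℝ)))
             (min 1 (p.2.2.2 ^ (-2 : ℝ))))

/-- The region of integration. -/
def A (n : ℕ) : Set (ℝ × ℝ × ℝ × ℝ) :=
  {p | 0 < p.1 ∧ 0 < p.2.1 ∧ 0 < p.2.2.1 ∧ 0 < p.2.2.2 ∧ p.2.2.1 < 1 ∧ (n : ℝ) ^ (-(1/2) : ℝ) ≤ p.2.2.2 ∧ p.2.2.2 < 1 ∧ (n : ℝ) ^ ((1:ℝ)/4) * p.2.2.1 ^ ((1:ℝ)/2) * p.2.2.2 ^ ((1:ℝ)/2) ≤ p.1 ∧ (n : ℝ) ^ ((1:ℝ)/4) ≤ p.2.1}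

lemma aux_L1 (θ a : ℝ) (hθ : 0 < θ) (ha : 0 < a) :
    ∫⁻ s in Ici a, ENNReal.ofReal (s ^ (-1 - 2 * θ)) = ENNReal.ofReal (a ^ (-(2 * θ)) / (2 * θ)) := by
  rw [setLIntegral_congr (Ioi_ae_eq_Ici (a := a)).symm]
  rw [← ofReal_integral_eq_lintegral_ofReal]
  · rw [integral_Ioi_rpow_of_lt (by linarith) ha]
    congr 1
    have : -1 - 2 * θ + 1 = -(2 * θ) := by ring
    rw [this, neg_div_neg_eq]
  · exact integrableOn_Ioi_rpow_of_lt (by linarith) ha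
  · filter_upwards [ae_restrict_mem measurableSet_Ioi] with s hs
    exact rpow_nonneg (ha.trans hs).le _

lemma aux_L2 (θ a : ℝ) (hθ : θ < 1) (ha : 0 ≤ a) (ha1 : a ≤ 1) :
    ∫⁻ u in Ioo a 1, ENNReal.ofReal (u ^ (-θ)) = ENNReal.ofReal ((1 - a ^ (1 - θ)) / (1 - θ)) := by
  rw [setLIntegral_congr (Ioo_ae_eq_Ioc (a := a) (b := 1))]
  rw [← ofReal_integral_eq_lintegral_ofReal]
  · rw [← intervalIntegral.integral_of_le ha1, integral_rpow (Or.inl (by linarith))]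
    have : -θ + 1 = 1 - θ := by ring
    rw [this, one_rpow]
  · have := intervalIntegral.intervalIntegrable_rpow' (a := a) (b := 1) (r := -θ) (by linarith)
    exact (intervalIntegrable_iff_integrableOn_Ioc_of_le ha1).1 this
  · filter_upwards [ae_restrict_mem measurableSet_Ioc] with s hs
    exact rpow_nonneg (ha.trans hs.1.le) _

lemma aux_measA (n : ℕ) : MeasurableSet (A n) := by
  unfold A
  simp only [setOf_and]
  refine MeasurableSet.inter ?_ (MeasurableSet.inter ?_ (MeasurableSet.inter ?_
    (MeasurableSet.inter ?_ (MeasurableSet.inter ?_ (MeasurableSet.inter ?_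
    (MeasurableSet.inter ?_ (MeasurableSet.inter ?_ ?_)))))))
  all_goals first
    | exact measurableSet_lt (by fun_prop) (by fun_prop)
    | exact measurableSet_le (by fun_prop) (by fun_prop)

lemma aux_G (θ : ℝ) (n : ℕ) (hn : 0 < n) (p : ℝ × ℝ × ℝ × ℝ) (hp : p ∈ A n) :
    G θ n p = (n : ℝ) ^ (2 : ℕ) * p.1 ^ (-1 - 2 * θ) * p.2.1 ^ (-1 - 2 * θ) := by
  obtain ⟨s, t, u, v⟩ := p
  obtain ⟨hs, ht, hu, hv, hu1, hvn, hv1, hsa, hta⟩ := hp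
  simp only at hs ht hu hv hu1 hvn hv1 hsa hta
  have hN : (1 : ℝ) ≤ n := by exact_mod_cast hn
  have hN0 : (0 : ℝ) < n := by linarith
  have ht4 : (n : ℝ) ≤ t ^ (4 : ℝ) := by
    have := rpow_le_rpow (by positivity) hta (z := 4) (by norm_num)
    rwa [← rpow_mul hN0.le, show (1 : ℝ) / 4 * 4 = 1 by norm_num, rpow_one] at this
  have hs4 : (n : ℝ) * u ^ (2 : ℝ) * v ^ (2 : ℝ) ≤ s ^ (4 : ℝ) := by
    have := rpow_le_rpow (by positivity) hsa (z := 4) (by norm_num)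
    rwa [mul_rpow (by positivity) (by positivity), mul_rpow (by positivity) (by positivity),
      ← rpow_mul hN0.le, ← rpow_mul hu.le, ← rpow_mul hv.le,
      show (1 : ℝ) / 4 * 4 = 1 by norm_num, rpow_one,
      show (1 : ℝ) / 2 * 4 = 2 by norm_num] at this
  have hv2 : 1 ≤ (n : ℝ) * v ^ (2 : ℝ) := by
    have := rpow_le_rpow (by positivity) hvn (z := 2) (by norm_num)
    rw [← rpow_mul hN0.le, show -(1 / 2 : ℝ) * 2 = -1 by norm_num, rpow_neg_one] at this
    calc (1 : ℝ) = n * (n : ℝ)⁻¹ := by field_simp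
      _ ≤ _ := by gcongr
  have hU : 1 ≤ u ^ (-2 : ℝ) := one_le_rpow_of_pos_of_le_one_of_nonpos hu hu1.le (by norm_num)
  have hV : 1 ≤ v ^ (-2 : ℝ) := one_le_rpow_of_pos_of_le_one_of_nonpos hv hv1.le (by norm_num)
  have hUU : u ^ (2 : ℝ) * u ^ (-2 : ℝ) = 1 := by rw [← rpow_add hu]; norm_num
  have hVV : v ^ (2 : ℝ) * v ^ (-2 : ℝ) = 1 := by rw [← rpow_add hv]; norm_num
  have hsU : (n : ℝ) * v ^ (2 : ℝ) ≤ s ^ (4 : ℝ) * u ^ (-2 : ℝ) := by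
    calc (n : ℝ) * v ^ (2 : ℝ) = ((n : ℝ) * u ^ (2 : ℝ) * v ^ (2 : ℝ)) * u ^ (-2 : ℝ) := by
          linear_combination (-(n : ℝ) * v ^ (2 : ℝ)) * hUU
      _ ≤ _ := by gcongr
  have hsUV : (n : ℝ) ≤ s ^ (4 : ℝ) * u ^ (-2 : ℝ) * v ^ (-2 : ℝ) := by
    calc (n : ℝ) = ((n : ℝ) * v ^ (2 : ℝ)) * v ^ (-2 : ℝ) := by
          linear_combination (-(n : ℝ)) * hVV
      _ ≤ _ := by gcongr
  have e1 : 1 ≤ (n : ℝ)⁻¹ * s ^ (4 : ℝ) * u ^ (-2 : ℝ) * v ^ (-2 : ℝ) := by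
    calc (1 : ℝ) = (n : ℝ)⁻¹ * n := by field_simp
      _ ≤ (n : ℝ)⁻¹ * (s ^ (4 : ℝ) * u ^ (-2 : ℝ) * v ^ (-2 : ℝ)) := by gcongr
      _ = _ := by ring
  have e2 : 1 ≤ (n : ℝ)⁻¹ * t ^ (4 : ℝ) := by
    calc (1 : ℝ) = (n : ℝ)⁻¹ * n := by field_simp
      _ ≤ _ := by gcongr
  have e3 := hv2.trans hsU
  have e4 : 1 ≤ t ^ (4 : ℝ) * v ^ (-2 : ℝ) := one_le_mul_of_one_le_of_one_le (hN.trans ht4) hV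
  have e5 : 1 ≤ u ^ (-2 : ℝ) * v ^ (-2 : ℝ) := one_le_mul_of_one_le_of_one_le hU hV
  unfold G
  simp only
  rw [min_eq_left hV, min_eq_right (le_min e5 hU),
    min_eq_right (le_min (le_min e1 e2) (le_min e3 e4)), mul_one]

/-- The function to be integrated, written as a product. -/
noncomputable def auxF (θ : ℝ) (n : ℕ) (s t u v : ℝ) : ENNReal :=
  (Ici ((n : ℝ) ^ ((1:ℝ)/4) * u ^ ((1:ℝ)/2) * v ^ ((1:ℝ)/2))).indicator
      (fun s => ENNReal.ofReal (s ^ (-1 - 2 * θ))) s *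
    ((Ici ((n : ℝ) ^ ((1:ℝ)/4))).indicator (fun t => ENNReal.ofReal (t ^ (-1 - 2 * θ))) t *
    ((Ioo (0:ℝ) 1).indicator 1 u *
    ((Ico ((n : ℝ) ^ (-(1/2) : ℝ)) 1).indicator (fun _ => ENNReal.ofReal ((n : ℝ) ^ 2)) v)))

lemma aux_F (θ : ℝ) (n : ℕ) (hn : 0 < n) (s t u v : ℝ) :
    (A n).indicator (fun p => ENNReal.ofReal (G θ n p)) (s, t, u, v) = auxF θ n s t u v := by
  have hN0 : (0 : ℝ) < n := by exact_mod_cast hn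
  have h14 : 0 < (n : ℝ) ^ ((1:ℝ)/4) := by positivity
  have h12 : 0 < (n : ℝ) ^ (-(1/2) : ℝ) := by positivity
  unfold auxF
  by_cases hp : (s, t, u, v) ∈ A n
  · rw [indicator_of_mem hp, aux_G θ n hn _ hp]
    obtain ⟨hs, ht, hu, hv, hu1, hvn, hv1, hsa, hta⟩ := hp
    simp only at hs ht hu hv hu1 hvn hv1 hsa hta
    rw [indicator_of_mem (mem_Ici.2 hsa), indicator_of_mem (mem_Ici.2 hta),
      indicator_of_mem (mem_Ioo.2 ⟨hu, hu1⟩), indicator_of_mem (mem_Ico.2 ⟨hvn, hv1⟩)]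
    simp only [Pi.one_apply, one_mul]
    rw [ENNReal.ofReal_mul (by positivity), ENNReal.ofReal_mul (by positivity)]
    ring
  · rw [indicator_of_notMem hp]
    symm
    by_cases h1 : u ∈ Ioo (0:ℝ) 1
    swap
    · simp [indicator_of_notMem h1]
    by_cases h2 : v ∈ Ico ((n : ℝ) ^ (-(1/2) : ℝ)) 1
    swap
    · rw [indicator_of_notMem h2]; simp
    by_cases h3 : t ∈ Ici ((n : ℝ) ^ ((1:ℝ)/4))
    swap
    · rw [indicator_of_notMem h3]; simp
    by_cases h4 : s ∈ Ici ((n : ℝ) ^ ((1:ℝ)/4) * u ^ ((1:ℝ)/2) * v ^ ((1:ℝ)/2))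
    swap
    · rw [indicator_of_notMem h4]; simp
    exfalso
    apply hp
    have hu := h1.1
    have hv : 0 < v := h12.trans_le h2.1
    exact ⟨lt_of_lt_of_le (by positivity) (mem_Ici.1 h4), h14.trans_le h3, hu, hv, h1.2, h2.1, h2.2, h4, h3⟩

/-- The constant produced by the `s` and `t` integrals. -/
noncomputable def auxK (θ : ℝ) (n : ℕ) : ENNReal :=
  ENNReal.ofReal (((n : ℝ) ^ ((1:ℝ)/4)) ^ (-(2 * θ)) / (2 * θ))

lemma aux_s (θ : ℝ) (hθ : 0 < θ) (n : ℕ) (hn : 0 < n) (t u v : ℝ) :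
    ∫⁻ s, auxF θ n s t u v =
      (Ici ((n : ℝ) ^ ((1:ℝ)/4))).indicator (fun t => ENNReal.ofReal (t ^ (-1 - 2 * θ))) t *
      (((Ioo (0:ℝ) 1).indicator (fun u => ENNReal.ofReal (u ^ (-θ))) u) *
      ((Ico ((n : ℝ) ^ (-(1/2) : ℝ)) 1).indicator (fun v => ENNReal.ofReal (v ^ (-θ))) v *
        (ENNReal.ofReal ((n : ℝ) ^ 2) * auxK θ n))) := by
  have hN0 : (0 : ℝ) < n := by exact_mod_cast hn
  have h12 : 0 < (n : ℝ) ^ (-(1/2) : ℝ) := by positivity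
  unfold auxF
  rw [lintegral_mul_const]
  swap
  · exact Measurable.indicator (by fun_prop) measurableSet_Ici
  by_cases h1 : u ∈ Ioo (0:ℝ) 1
  swap
  · simp [indicator_of_notMem h1]
  by_cases h2 : v ∈ Ico ((n : ℝ) ^ (-(1/2) : ℝ)) 1
  swap
  · simp only [indicator_of_notMem h2]; simp
  have hu := h1.1
  have hv : 0 < v := h12.trans_le h2.1
  rw [lintegral_indicator measurableSet_Ici, aux_L1 θ _ hθ (by positivity)]
  simp only [indicator_of_mem h1, indicator_of_mem h2, Pi.one_apply, one_mul]
  rw [mul_rpow (by positivity) (by positivity), mul_rpow (by positivity) (by positivity),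
    ← rpow_mul hu.le, ← rpow_mul hv.le, show (1 : ℝ) / 2 * -(2 * θ) = -θ by ring, auxK,
    show ((n : ℝ) ^ ((1:ℝ)/4)) ^ (-(2 * θ)) * u ^ (-θ) * v ^ (-θ) / (2 * θ)
      = (((n : ℝ) ^ ((1:ℝ)/4)) ^ (-(2 * θ)) / (2 * θ)) * u ^ (-θ) * v ^ (-θ) by ring,
    ENNReal.ofReal_mul (by positivity), ENNReal.ofReal_mul (by positivity)]
  ring

lemma aux_measG (θ : ℝ) (n : ℕ) : Measurable (G θ n) := by
  unfold G
  fun_prop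

lemma aux_total (θ : ℝ) (hθ : 0 < θ) (hθ1 : θ < 1) (n : ℕ) (hn : 0 < n) :
    ∫⁻ p in A n, ENNReal.ofReal (G θ n p) =
      auxK θ n * (ENNReal.ofReal (1 / (1 - θ)) *
      (ENNReal.ofReal ((1 - ((n : ℝ) ^ (-(1/2) : ℝ)) ^ (1 - θ)) / (1 - θ)) *
        (ENNReal.ofReal ((n : ℝ) ^ 2) * auxK θ n))) := by
  have hN1 : (1 : ℝ) ≤ n := by exact_mod_cast hn
  have hN0 : (0 : ℝ) < n := by linarith
  have hm : Measurable ((A n).indicator (fun p => ENNReal.ofReal (G θ n p))) :=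
    ((aux_measG θ n).ennreal_ofReal).indicator (aux_measA n)
  have mT : Measurable ((Ici ((n : ℝ) ^ ((1:ℝ)/4))).indicator
      (fun t => ENNReal.ofReal (t ^ (-1 - 2 * θ)))) :=
    Measurable.indicator (by fun_prop) measurableSet_Ici
  have mU : Measurable ((Ioo (0:ℝ) 1).indicator (fun u => ENNReal.ofReal (u ^ (-θ)))) :=
    Measurable.indicator (by fun_prop) measurableSet_Ioo
  have mV : Measurable ((Ico ((n : ℝ) ^ (-(1/2) : ℝ)) 1).indicator
      (fun v => ENNReal.ofReal (v ^ (-θ)))) :=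
    Measurable.indicator (by fun_prop) measurableSet_Ico
  rw [← lintegral_indicator (aux_measA n), Measure.volume_eq_prod,
    lintegral_prod_symm _ hm.aemeasurable]
  have h1 : ∀ y : ℝ × ℝ × ℝ, ∫⁻ x : ℝ, (A n).indicator (fun p => ENNReal.ofReal (G θ n p)) (x, y) =
      (Ici ((n : ℝ) ^ ((1:ℝ)/4))).indicator (fun t => ENNReal.ofReal (t ^ (-1 - 2 * θ))) y.1 *
      (((Ioo (0:ℝ) 1).indicator (fun u => ENNReal.ofReal (u ^ (-θ))) y.2.1) *
      ((Ico ((n : ℝ) ^ (-(1/2) : ℝ)) 1).indicator (fun v => ENNReal.ofReal (v ^ (-θ))) y.2.2 *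
        (ENNReal.ofReal ((n : ℝ) ^ 2) * auxK θ n))) := by
    rintro ⟨t, u, v⟩
    simp only [aux_F θ n hn]
    exact aux_s θ hθ n hn t u v
  simp only [h1]
  rw [Measure.volume_eq_prod, lintegral_prod_mul mT.aemeasurable
    (g := fun z : ℝ × ℝ => ((Ioo (0:ℝ) 1).indicator (fun u => ENNReal.ofReal (u ^ (-θ))) z.1) *
      ((Ico ((n : ℝ) ^ (-(1/2) : ℝ)) 1).indicator (fun v => ENNReal.ofReal (v ^ (-θ))) z.2 *
        (ENNReal.ofReal ((n : ℝ) ^ 2) * auxK θ n)))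
    ((mU.comp measurable_fst).mul ((mV.comp measurable_snd).mul_const _)).aemeasurable]
  rw [Measure.volume_eq_prod, lintegral_prod_mul mU.aemeasurable
    (g := fun z : ℝ => ((Ico ((n : ℝ) ^ (-(1/2) : ℝ)) 1).indicator
      (fun v => ENNReal.ofReal (v ^ (-θ))) z * (ENNReal.ofReal ((n : ℝ) ^ 2) * auxK θ n)))
    (mV.mul_const _).aemeasurable]
  rw [lintegral_mul_const _ mV, lintegral_indicator measurableSet_Ici,
    lintegral_indicator measurableSet_Ioo, lintegral_indicator measurableSet_Ico,
    setLIntegral_congr (Ioo_ae_eq_Ico (a := (n : ℝ) ^ (-(1/2) : ℝ)) (b := 1)).symm,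
    aux_L1 θ _ hθ (by positivity), aux_L2 θ 0 hθ1 le_rfl zero_le_one,
    aux_L2 θ _ hθ1 (by positivity) (rpow_le_one_of_one_le_of_nonpos hN1 (by norm_num)),
    zero_rpow (by linarith), sub_zero, auxK]

lemma aux_int (θ : ℝ) (hθ : 0 < θ) (hθ1 : θ < 1) (n : ℕ) (hn : 0 < n) :
    ∫ p in A n, G θ n p = (1 - ((n : ℝ) ^ (-(1/2) : ℝ)) ^ (1 - θ)) / 4 *
      ((n : ℝ) ^ (2 - θ) * θ ^ (-2 : ℝ) * (1 - θ) ^ (-2 : ℝ)) := by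
  have hN1 : (1 : ℝ) ≤ n := by exact_mod_cast hn
  have hN0 : (0 : ℝ) < n := by linarith
  have h1θ : 0 < 1 - θ := by linarith
  have hle : ((n : ℝ) ^ (-(1/2) : ℝ)) ^ (1 - θ) ≤ 1 :=
    rpow_le_one (by positivity) (rpow_le_one_of_one_le_of_nonpos hN1 (by norm_num)) h1θ.le
  rw [integral_eq_lintegral_of_nonneg_ae ?_ (aux_measG θ n).aestronglyMeasurable,
    aux_total θ hθ hθ1 n hn]
  swap
  · filter_upwards [ae_restrict_mem (aux_measA n)] with p hp
    rw [aux_G θ n hn p hp]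
    have := hp.1
    have := hp.2.1
    simp only [Pi.zero_apply]
    positivity
  have hnn : 0 ≤ (1 - ((n : ℝ) ^ (-(1/2) : ℝ)) ^ (1 - θ)) / (1 - θ) :=
    div_nonneg (by linarith) h1θ.le
  simp only [auxK, ENNReal.toReal_mul]
  rw [ENNReal.toReal_ofReal (by positivity), ENNReal.toReal_ofReal (by positivity),
    ENNReal.toReal_ofReal hnn, ENNReal.toReal_ofReal (by positivity)]
  have k1 : (n : ℝ) ^ (2 - θ) = (n : ℝ) ^ 2 *
      ((((n : ℝ) ^ ((1:ℝ)/4)) ^ (-(2 * θ))) * (((n : ℝ) ^ ((1:ℝ)/4)) ^ (-(2 * θ)))) := by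
    rw [← rpow_mul hN0.le, ← rpow_add hN0, ← rpow_natCast, ← rpow_add hN0]
    congr 1
    push_cast
    ring
  have k2 : θ ^ (-2 : ℝ) = (θ ^ 2)⁻¹ := by
    rw [rpow_neg hθ.le]; norm_num
  have k3 : (1 - θ) ^ (-2 : ℝ) = ((1 - θ) ^ 2)⁻¹ := by
    rw [rpow_neg h1θ.le]; norm_num
  rw [k1, k2, k3]
  generalize ((n : ℝ) ^ ((1:ℝ)/4)) ^ (-(2 * θ)) = a
  generalize ((n : ℝ) ^ (-(1/2) : ℝ)) ^ (1 - θ) = b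
  field_simp
  try ring

theorem stmt_7 :
    (∃ C : ℝ, 0 < C ∧ ∀ θ : ℝ, 0 < θ → θ < 1 → ∀ n : ℕ, 0 < n →
      (∫ p in A n, G θ n p) ≤ C * ((n : ℝ) ^ (2 - θ) * θ ^ (-2 : ℝ) * (1 - θ) ^ (-2 : ℝ))) ∧
    (∃ c : ℝ, 0 < c ∧ ∀ θ : ℝ, 0 < θ → θ < 1 → ∀ n : ℕ, 0 < n →
      (8 : ℝ) ≤ (n : ℝ) ^ (1 - θ) →
      c * ((n : ℝ) ^ (2 - θ) * θ ^ (-2 : ℝ) * (1 - θ) ^ (-2 : ℝ)) ≤ ∫ p in A n, G θ n p) := by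
  constructor
  · refine ⟨1 / 4, by norm_num, fun θ hθ hθ1 n hn => ?_⟩
    rw [aux_int θ hθ hθ1 n hn]
    have hN0 : (0 : ℝ) < n := by exact_mod_cast hn
    have h1θ : 0 < 1 - θ := by linarith
    have : 0 ≤ ((n : ℝ) ^ (-(1/2) : ℝ)) ^ (1 - θ) := by positivity
    gcongr
    linarith
  · refine ⟨1 / 8, by norm_num, fun θ hθ hθ1 n hn h8 => ?_⟩
    rw [aux_int θ hθ hθ1 n hn]
    have hN0 : (0 : ℝ) < n := by exact_mod_cast hn
    have h1θ : 0 < 1 - θ := by linarith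
    have hb : ((n : ℝ) ^ (-(1/2) : ℝ)) ^ (1 - θ) ≤ 1 / 2 := by
      rw [← rpow_mul hN0.le, mul_comm, rpow_mul hN0.le]
      calc ((n : ℝ) ^ (1 - θ)) ^ (-(1/2) : ℝ) ≤ (4 : ℝ) ^ (-(1/2) : ℝ) :=
            rpow_le_rpow_of_nonpos (by norm_num) (by linarith) (by norm_num)
        _ = 1 / 2 := by
            rw [show (4 : ℝ) = 2 ^ (2 : ℝ) by norm_num, ← rpow_mul (by norm_num),
              show (2 : ℝ) * -(1/2) = -1 by norm_num, rpow_neg_one]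
            norm_num
    exact mul_le_mul_of_nonneg_right (by linarith) (by positivity)
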